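/- arXiv:1610.03537 — 2 statements merged into one kernel-verified Lean document; each statement's English description precedes it below -/
import Mathlib

section
/- Let (X,T) be a minimal Cantor system and let S be a bounded speedup of T, and suppose S is minimal. Then h(S) ≥ c·h(T), where c is the orbit number of the speedup and h denotes topological entropy. -/
/-- A minimal Cantor-type dynamical system: every `T`-orbit (over `ℤ`) is dense. -/
def IsMinimalHomeo {X : Type*} [TopologicalSpace X] (T : Equiv.Perm X) : Prop :=
  ∀ x : X, Dense (Set.range fun n : ℤ => (T ^ n) x)

/-- The (two-sided) orbit of a point under a bijection. -/
def zOrbit {X : Type*} (T : Equiv.Perm X) (x : X) : Set X :=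
  Set.range fun n : ℤ => (T ^ n) x

/-- `c` is the orbit number of the speedup `S` of `T`: every `T`-orbit is the union of exactly
`c` distinct `S`-orbits. -/
def IsOrbitNumber {X : Type*} (T S : Equiv.Perm X) (c : ℕ) : Prop :=
  0 < c ∧ ∀ x : X,
    {O : Set X | (∃ y : X, O = zOrbit S y) ∧ O ⊆ zOrbit T x}.ncard = c

open Set Filter Topology Uniformity Dynamics

namespace BoundedSpeedup

variable {X : Type*}

lemma zOrbit_eq_of_mem {S : Equiv.Perm X} {x y : X} (h : y ∈ zOrbit S x) :
    zOrbit S y = zOrbit S x := by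
  obtain ⟨k, rfl⟩ := h
  ext w
  constructor
  · rintro ⟨l, rfl⟩
    exact ⟨l + k, by simp [zpow_add]⟩
  · rintro ⟨l, rfl⟩
    exact ⟨l - k, by simp [zpow_sub]⟩

lemma pow_apply_mem_zOrbit {S : Equiv.Perm X} {x y : X} (h : y ∈ zOrbit S x) (n : ℕ) :
    (S ^ n) y ∈ zOrbit S x := by
  rw [← zOrbit_eq_of_mem h]
  exact ⟨n, by simp⟩

/-- In a minimal system on a nonempty perfect Hausdorff space, iterates of a point are distinct. -/
lemma pow_apply_injective [TopologicalSpace X] [T2Space X] [PerfectSpace X]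
    {T : Equiv.Perm X} (hT : IsMinimalHomeo T) (x : X) :
    Function.Injective fun n : ℕ => (T ^ n) x := by
  intro m n hmn
  by_contra hne
  have hfin : (range fun k : ℤ => (T ^ k) x).Finite := by
    refine Set.not_infinite.1 fun hinf => ?_
    have : ∃ d : ℕ, 0 < d ∧ (T ^ d) x = x := by
      wlog hlt : m < n generalizing m n
      · exact this hmn.symm (Ne.symm hne) (by omega)
      refine ⟨n - m, by omega, (T ^ m).injective ?_⟩
      rw [← Equiv.Perm.mul_apply, ← pow_add, Nat.add_sub_cancel' hlt.le]
      exact hmn.symm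
    obtain ⟨d, hd, hdx⟩ := this
    refine hinf ((Set.finite_Ico (0 : ℤ) d).image (fun k : ℤ => (T ^ k) x) |>.subset ?_)
    rintro _ ⟨k, rfl⟩
    refine ⟨k % d, ⟨Int.emod_nonneg _ (by omega), Int.emod_lt_of_pos _ (by omega)⟩, ?_⟩
    have hper : (T ^ ((d : ℤ) * (k / d))) x = x := by
      rw [zpow_mul, zpow_natCast]
      exact Equiv.Perm.zpow_apply_eq_self_of_apply_eq_self hdx _
    change (T ^ (k % d)) x = (T ^ k) x
    conv_rhs => rw [← Int.emod_add_mul_ediv k d, zpow_add, Equiv.Perm.mul_apply, hper]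
  have huniv : (univ : Set X).Finite := by
    rw [← (hT x).closure_eq, hfin.isClosed.closure_eq]
    exact hfin
  exact (infinite_of_mem_nhds x univ_mem) huniv

/-- The jump function of a bounded speedup of an aperiodic homeomorphism is continuous. -/
lemma continuous_jump [TopologicalSpace X] [T2Space X] {T S : Equiv.Perm X} {p : X → ℕ} {M : ℕ}
    (hT : Continuous T) (hS : Continuous S) (hinj : ∀ x, Function.Injective fun n : ℕ => (T ^ n) x)
    (hp : ∀ x, p x ≤ M) (hSp : ∀ x, S x = (T ^ p x) x) : Continuous p := by
  have hclosed (k : ℕ) : IsClosed (p ⁻¹' {k}) := by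
    have : p ⁻¹' {k} = {x | S x = (T ^ k) x} := by
      ext x
      simp only [mem_preimage, mem_singleton_iff, mem_ofPred_eq, hSp]
      exact (hinj x).eq_iff.symm
    rw [this]
    refine isClosed_eq hS ?_
    rw [← Equiv.Perm.iterate_eq_pow]
    exact hT.iterate k
  refine continuous_iff_isClosed.2 fun s _ => ?_
  have : p ⁻¹' s = ⋃ k ∈ s ∩ Iic M, p ⁻¹' {k} := by
    ext x
    simp [hp x]
  rw [this]
  exact ((finite_Iic M).subset inter_subset_right).isClosed_biUnion fun k _ => hclosed k

/-- The total displacement along the first `n` steps of the `S`-orbit of `y`. -/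
def jumpSum (S : Equiv.Perm X) (p : X → ℕ) (y : X) (n : ℕ) : ℕ :=
  ∑ i ∈ Finset.range n, p ((S ^ i) y)

lemma jumpSum_succ (S : Equiv.Perm X) (p : X → ℕ) (y : X) (n : ℕ) :
    jumpSum S p y (n + 1) = jumpSum S p y n + p ((S ^ n) y) :=
  Finset.sum_range_succ _ _

lemma jumpSum_strictMono {S : Equiv.Perm X} {p : X → ℕ} (hp : ∀ x, 1 ≤ p x) (y : X) :
    StrictMono (jumpSum S p y) :=
  strictMono_nat_of_lt_succ fun n => by
    rw [jumpSum_succ]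
    have := hp ((S ^ n) y)
    omega

lemma le_jumpSum_succ (S : Equiv.Perm X) (p : X → ℕ) (y : X) (n : ℕ) :
    p y ≤ jumpSum S p y (n + 1) := by
  rw [jumpSum, Finset.sum_range_succ']
  simp

section

variable {T S : Equiv.Perm X} {p : X → ℕ}

lemma pow_apply_eq_jumpSum (hSp : ∀ x, S x = (T ^ p x) x) (y : X) (n : ℕ) :
    (S ^ n) y = (T ^ jumpSum S p y n) y := by
  induction n with
  | zero => simp [jumpSum]
  | succ n ih =>
    rw [jumpSum_succ, pow_succ', Equiv.Perm.mul_apply, hSp, add_comm, pow_add,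
      Equiv.Perm.mul_apply, ← ih]

/-- Every `S`-orbit contained in the `T`-orbit of `x` jumps over (or onto) `x`. -/
lemma exists_crossing (hp : ∀ x, 1 ≤ p x) (hSp : ∀ x, S x = (T ^ p x) x) {x z : X}
    (hz : zOrbit S z ⊆ zOrbit T x) :
    ∃ j : ℕ, (T ^ j).symm x ∈ zOrbit S z ∧ j ≤ p ((T ^ j).symm x) := by
  obtain ⟨k₀, hk₀⟩ := hz ⟨0, rfl⟩
  have hback (m : ℕ) : ∃ k : ℤ, k ≤ k₀ - m ∧ (T ^ k) x ∈ zOrbit S z := by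
    induction m with
    | zero => exact ⟨k₀, by simp, 0, hk₀.symm⟩
    | succ m ih =>
      obtain ⟨k, hk, l, hl⟩ := ih
      set y := (S ^ (l - 1)) z with hy
      have hSy : S y = (T ^ k) x := by
        rw [← hl, hy, ← Equiv.Perm.mul_apply, ← zpow_one_add, add_sub_cancel]
      have hTy : (T ^ (k - p y)) x = y := by
        rw [sub_eq_neg_add, zpow_add, Equiv.Perm.mul_apply, ← hSy, hSp, zpow_neg, zpow_natCast]
        exact (T ^ p y).symm_apply_apply y
      have := hp y
      exact ⟨k - p y, by push_cast; omega, l - 1, hTy.symm⟩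
  obtain ⟨k, hk, hkz⟩ := hback k₀.toNat
  obtain ⟨k, ⟨hk0, hkz⟩, hmax⟩ := Int.exists_greatest_of_bdd
    (P := fun k => k ≤ 0 ∧ (T ^ k) x ∈ zOrbit S z) ⟨0, fun _ h => h.1⟩ ⟨k, by omega, hkz⟩
  have hj : (T ^ k.natAbs).symm x = (T ^ k) x := by
    have : k = -(k.natAbs : ℤ) := by omega
    conv_rhs => rw [this, zpow_neg, zpow_natCast]
    rfl
  refine ⟨k.natAbs, hj ▸ hkz, ?_⟩
  rw [hj]
  by_contra! hlt
  have := hp ((T ^ k) x)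
  have := hmax (k + p ((T ^ k) x)) ⟨by omega, by
    rw [add_comm, zpow_add, Equiv.Perm.mul_apply, zpow_natCast, ← hSp]
    exact pow_apply_mem_zOrbit hkz 1⟩
  omega

/-- Among the `c` strands of `S` passing over `x`, the fastest one covers distance about `c * n`
in `n` steps. -/
lemma exists_fast_strand (hp : ∀ x, 1 ≤ p x) (hSp : ∀ x, S x = (T ^ p x) x) {c : ℕ}
    (hc : IsOrbitNumber T S c) (x : X) {n : ℕ} (hn : 0 < n) :
    ∃ j : ℕ, j ≤ p ((T ^ j).symm x) ∧ c * n + j ≤ jumpSum S p ((T ^ j).symm x) n + 1 := by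
  obtain ⟨hc0, hcard⟩ := hc
  specialize hcard x
  set A := {O : Set X | (∃ y : X, O = zOrbit S y) ∧ O ⊆ zOrbit T x}
  have hA : A.Finite := Set.finite_of_ncard_pos (by omega)
  have hcross (O : Set X) (hO : O ∈ A) :
      ∃ j : ℕ, (T ^ j).symm x ∈ O ∧ j ≤ p ((T ^ j).symm x) := by
    obtain ⟨⟨z, rfl⟩, hz⟩ := hO
    exact exists_crossing hp hSp hz
  choose! j hjO hjp using hcross
  by_contra! hcon
  let y (O : Set X) : X := (T ^ j O).symm x
  let pos (a : Set X × ℕ) : ℕ := jumpSum S p (y a.1) (a.2 + 1) - j a.1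
  have hle (O : Set X) (hO : O ∈ A) (m : ℕ) : j O ≤ jumpSum S p (y O) (m + 1) :=
    (hjp O hO).trans (le_jumpSum_succ S p _ m)
  have hpos (O : Set X) (hO : O ∈ A) (m : ℕ) : (T ^ pos (O, m)) x ∈ O := by
    have h1 : (T ^ pos (O, m)) x = (S ^ (m + 1)) (y O) := by
      rw [pow_apply_eq_jumpSum hSp, ← Nat.sub_add_cancel (hle O hO m), pow_add,
        Equiv.Perm.mul_apply]
      simp [y, pos]
    rw [h1]
    have hy := hjO O hO
    obtain ⟨⟨z, rfl⟩, -⟩ := hO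
    exact pow_apply_mem_zOrbit hy _
  have hmaps : ∀ a ∈ hA.toFinset ×ˢ Finset.range n, pos a ∈ Finset.range (c * n - 1) := by
    rintro ⟨O, m⟩ ha
    simp only [Finset.mem_product, Set.Finite.mem_toFinset, Finset.mem_range] at ha ⊢
    have h1 := hcon (j O) (hjp O ha.1)
    have h2 : jumpSum S p (y O) (m + 1) ≤ jumpSum S p (y O) n :=
      (jumpSum_strictMono hp _).monotone (by omega)
    have h3 := hle O ha.1 m
    simp only [pos]
    simp only [y] at h2 h3 ⊢
    omega
  have hinj : Set.InjOn pos (hA.toFinset ×ˢ Finset.range n : Finset (Set X × ℕ)) := by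
    rintro ⟨O, m⟩ ha ⟨O', m'⟩ ha' heq
    simp only [Finset.coe_product, Set.mem_prod, Finset.mem_coe, Set.Finite.mem_toFinset] at ha ha'
    have h1 := hpos O ha.1 m
    have h2 := hpos O' ha'.1 m'
    rw [heq] at h1
    obtain rfl : O = O' := by
      obtain ⟨⟨z, rfl⟩, -⟩ := ha.1
      obtain ⟨⟨z', rfl⟩, -⟩ := ha'.1
      rw [← zOrbit_eq_of_mem h1, zOrbit_eq_of_mem h2]
    have h3 := hle O ha.1 m
    have h4 := hle O ha.1 m'
    have h5 : jumpSum S p (y O) (m + 1) = jumpSum S p (y O) (m' + 1) := by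
      simp only [pos] at heq
      omega
    have := (jumpSum_strictMono hp _).injective h5
    simp only [Prod.mk.injEq, true_and]
    omega
  have hcardle := Finset.card_le_card_of_injOn pos hmaps hinj
  rw [Finset.card_product, Finset.card_range, Finset.card_range,
    ← Set.ncard_eq_toFinset_card A hA, hcard] at hcardle
  have : 0 < c * n := Nat.mul_pos hc0 hn
  omega

/-- Points with close `S`-orbits have the same jumps, hence close `T`-orbits over the whole
distance travelled. -/
lemma close_of_close_speedup (hSp : ∀ x, S x = (T ^ p x) x) {M : ℕ} (hpM : ∀ x, p x ≤ M)
    {U V : SetRel X X}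
    (hV : ∀ y z, (y, z) ∈ V → p y = p z ∧ (y, z) ∈ dynEntourage T U (M + 1))
    {y z : X} {n : ℕ} (h : (y, z) ∈ dynEntourage S V (n + 1)) :
    jumpSum S p y (n + 1) = jumpSum S p z (n + 1) ∧
      (y, z) ∈ dynEntourage T U (jumpSum S p y (n + 1) + 1) := by
  simp only [mem_dynEntourage, Equiv.Perm.iterate_eq_pow] at *
  have hq : ∀ m ≤ n + 1, jumpSum S p y m = jumpSum S p z m := fun m hm =>
    Finset.sum_congr rfl fun i hi =>
      (hV _ _ (h i ((Finset.mem_range.1 hi).trans_le hm))).1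
  refine ⟨hq _ le_rfl, ?_⟩
  have hstep (m : ℕ) (hm : m < n + 1) (k : ℕ) (hk : jumpSum S p y m ≤ k)
      (hk' : k < jumpSum S p y (m + 1) + 1) : ((T ^ k) y, (T ^ k) z) ∈ U := by
    have hi := hpM ((S ^ m) y)
    rw [jumpSum_succ] at hk'
    have := (hV _ _ (h m hm)).2 (k - jumpSum S p y m) (by omega)
    rw [pow_apply_eq_jumpSum hSp, pow_apply_eq_jumpSum hSp z, ← hq m hm.le,
      ← Equiv.Perm.mul_apply, ← Equiv.Perm.mul_apply, ← pow_add, Nat.sub_add_cancel hk] at this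
    exact this
  induction n with
  | zero => exact fun k hk => hstep 0 (by omega) k (by simp [jumpSum]) hk
  | succ n ih =>
    intro k hk
    rcases le_or_gt (jumpSum S p y (n + 1)) k with hle | hlt
    · exact hstep (n + 1) (by omega) k hle hk
    · exact ih (fun i hi => h i (by omega)) (fun m hm => hq m (by omega))
        (fun m hm => hstep m (by omega)) k (by omega)

/-- A dynamical cover for `S` of length `n` yields one for `T` of length `c * n`, after adding
boundedly many `T`-translates. -/
lemma coverMincard_mul_le (hp : ∀ x, 1 ≤ p x) (hSp : ∀ x, S x = (T ^ p x) x) {M : ℕ}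
    (hpM : ∀ x, p x ≤ M) {c : ℕ} (hc : IsOrbitNumber T S c) {U V : SetRel X X}
    (hV : ∀ y z, (y, z) ∈ V → p y = p z ∧ (y, z) ∈ dynEntourage T U (M + 1))
    {n : ℕ} (hn : 0 < n) (hfin : coverMincard S univ V n < ⊤) :
    coverMincard T univ U (c * n) ≤ (M + 1 : ℕ) * coverMincard S univ V n := by
  classical
  obtain ⟨s, hs, hcard⟩ := (coverMincard_finite_iff S univ V n).1 hfin
  rw [← hcard]
  let t : Finset X := (Finset.range (M + 1) ×ˢ s).image fun a => (T ^ a.1) a.2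
  have ht : t.card ≤ (M + 1) * s.card := by
    simpa using Finset.card_image_le (s := Finset.range (M + 1) ×ˢ s)
      (f := fun a => (T ^ a.1) a.2)
  have hcover : IsDynCoverOf T univ U (c * n) t := by
    intro x _
    obtain ⟨j, hj, hfast⟩ := exists_fast_strand hp hSp hc x hn
    obtain ⟨z, hzs, hz⟩ := hs (mem_univ ((T ^ j).symm x))
    obtain ⟨n, rfl⟩ := Nat.exists_eq_add_one.2 hn
    have hclose := (close_of_close_speedup hSp hpM hV hz).2
    have hjM := hj.trans (hpM _)
    refine ⟨(T ^ j) z, Finset.mem_coe.2 (Finset.mem_image.2 ⟨(j, z), ?_, rfl⟩), ?_⟩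
    · simp only [Finset.mem_product, Finset.mem_range]
      exact ⟨by omega, hzs⟩
    · rw [mem_dynEntourage] at hclose
      refine mem_dynEntourage.2 fun k hk => ?_
      have := hclose (k + j) (by omega)
      simp only [Equiv.Perm.iterate_eq_pow, pow_add, Equiv.Perm.mul_apply,
        Equiv.apply_symm_apply] at this ⊢
      exact this
  refine hcover.coverMincard_le_card.trans ?_
  exact_mod_cast ht

end

end BoundedSpeedup

open BoundedSpeedup in
/-- If `S` is a minimal bounded speedup of a minimal Cantor system `(X,T)`
with orbit number `c`, then `h(S) ≥ c · h(T)`, where `h` is topological entropy. -/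
theorem boundedSpeedup_entropy_lower_bound
    {X : Type*} [MetricSpace X] [CompactSpace X]
    [TotallyDisconnectedSpace X] [PerfectSpace X] [Nonempty X]
    (T : Equiv.Perm X) (hTc : Continuous T) (hTc' : Continuous T.symm)
    (hTmin : IsMinimalHomeo T)
    (p : X → ℕ) (hp1 : ∀ x, 1 ≤ p x) (hpbdd : ∃ M : ℕ, ∀ x, p x ≤ M)
    (S : Equiv.Perm X) (hSc : Continuous S) (hSc' : Continuous S.symm)
    (hSp : ∀ x, S x = (T ^ p x) x) (hSmin : IsMinimalHomeo S)
    (c : ℕ) (hc : IsOrbitNumber T S c) :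
    (c : EReal) * Dynamics.coverEntropy (⇑T) Set.univ ≤
      Dynamics.coverEntropy (⇑S) Set.univ := by
  obtain ⟨M, hpM⟩ := hpbdd
  have hp : Continuous p := continuous_jump hTc hSc (pow_apply_injective hTmin) hpM hSp
  have hmono (U : SetRel X X) : Monotone fun n => (coverMincard T univ U n).toENNReal :=
    fun _ _ h => ENat.toENNReal_mono (coverMincard_monotone_time T univ U h)
  have key (U : SetRel X X) (hU : U ∈ 𝓤 X) :
      (c : EReal) * coverEntropyEntourage T univ U ≤ coverEntropy S univ := by
    have hV₁ : {a : X × X | p a.1 = p a.2} ∈ 𝓤 X :=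
      CompactSpace.uniformContinuous_of_continuous hp
        (DiscreteUniformity.relId_mem_uniformity ℕ)
    have hV₂ := dynEntourage_mem_uniformity
      (CompactSpace.uniformContinuous_of_continuous hTc) hU (M + 1)
    have hV := inter_mem hV₁ hV₂
    refine le_trans ?_ (coverEntropyEntourage_le_coverEntropy S univ hV)
    rw [coverEntropyEntourage, ← (hmono U).expGrowthSup_comp_mul hc.1.ne']
    refine ExpGrowth.expGrowthSup_le_of_eventually_le (b := ((M + 1 : ℕ) : ℕ∞).toENNReal)
      (by simp) ?_
    filter_upwards [eventually_gt_atTop 0] with n hn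
    rw [← ENat.toENNReal_mul]
    exact ENat.toENNReal_mono (coverMincard_mul_le hp1 hSp hpM hc (fun y z h => h) hn
      (coverMincard_finite_of_isCompact_invariant isCompact_univ (mapsTo_univ _ _) hV n))
  have hc0 : (0 : EReal) < c := by exact_mod_cast hc.1
  have hctop : (c : EReal) ≠ ⊤ := EReal.natCast_ne_top c
  rw [mul_comm, ← EReal.le_div_iff_mul_le hc0 hctop]
  refine iSup₂_le fun U hU => ?_
  rw [EReal.le_div_iff_mul_le hc0 hctop, mul_comm]
  exact key U hU
end

section
/- Let (X,T) be a minimal Cantor system and let S be a minimal bounded speedup of T with jump function p and orbit number c. If every S-invariant Borel probability measure on X is T-invariant and every T-invariant Borel probability measure is S-invariant (i.e. M(X,T) = M(X,S)), then h(S) = c·h(T), where h denotes topological entropy. -/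
open MeasureTheory

section Auxiliary

open Filter Topology Dynamics Set ExpGrowth

/-! ### Comparing covering entropies under a time change -/

section TimeChange

variable {X : Type*}

lemma coverMincard_le_of_dynEntourage_subset {S T : X → X} {F : Set X} {U V : SetRel X X}
    {m n : ℕ} (h : dynEntourage T V m ⊆ dynEntourage S U n) :
    coverMincard S F U n ≤ coverMincard T F V m :=
  biInf_mono fun _ hs => SetRel.IsCover.mono_entourage h hs

lemma monotone_coverMincard_toENNReal (T : X → X) (F : Set X) (U : SetRel X X) :
    Monotone fun n : ℕ => ((coverMincard T F U n : ℕ∞) : ENNReal) :=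
  fun _ _ h => ENat.toENNReal_mono (coverMincard_monotone_time T F U h)

lemma coverEntropyEntourage_le_natCast_mul {S T : X → X} {F : Set X} {U V : SetRel X X}
    {v : ℕ → ℕ} {c : ℕ} (hc : c ≠ 0)
    (hv : Tendsto (fun n => (v n : EReal) / n) atTop (𝓝 c))
    (h : ∀ n, dynEntourage T V (v n) ⊆ dynEntourage S U n) :
    coverEntropyEntourage S F U ≤ c * coverEntropyEntourage T F V := by
  rw [coverEntropyEntourage, coverEntropyEntourage,
    ← (monotone_coverMincard_toENNReal T F V).expGrowthSup_comp hv (by exact_mod_cast hc)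
      (EReal.natCast_ne_top c)]
  refine expGrowthSup_monotone fun n => ?_
  exact ENat.toENNReal_mono (coverMincard_le_of_dynEntourage_subset (h n))

lemma natCast_mul_le_coverEntropyEntourage {S T : X → X} {F : Set X} {U V : SetRel X X}
    {v : ℕ → ℕ} {c : ℕ} (hc : c ≠ 0)
    (hv : Tendsto (fun n => (v n : EReal) / n) atTop (𝓝 c))
    (h : ∀ n, dynEntourage S V n ⊆ dynEntourage T U (v n)) :
    c * coverEntropyEntourage T F U ≤ coverEntropyEntourage S F V := by
  rw [coverEntropyEntourage, coverEntropyEntourage,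
    ← (monotone_coverMincard_toENNReal T F U).expGrowthSup_comp hv (by exact_mod_cast hc)
      (EReal.natCast_ne_top c)]
  refine expGrowthSup_monotone fun n => ?_
  exact ENat.toENNReal_mono (coverMincard_le_of_dynEntourage_subset (h n))

end TimeChange

/-! ### Uniform convergence of Birkhoff averages -/

section Birkhoff

variable {X : Type*} [MeasurableSpace X]

/-- The empirical measure of the orbit segment of length `n + 1` starting at `x`. -/
noncomputable def empiricalMeasure (S : X → X) (n : ℕ) (x : X) : Measure X :=
  ((n + 1 : ℕ) : ENNReal)⁻¹ • ∑ k ∈ Finset.range (n + 1), Measure.dirac (S^[k] x)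

instance (S : X → X) (n : ℕ) (x : X) : IsProbabilityMeasure (empiricalMeasure S n x) := by
  constructor
  simp only [empiricalMeasure, Measure.smul_apply, Measure.finsetSum_apply, measure_univ,
    Finset.sum_const, Finset.card_range, nsmul_eq_mul, mul_one, smul_eq_mul]
  exact ENNReal.inv_mul_cancel (by simp) (ENNReal.natCast_ne_top _)

lemma integral_empiricalMeasure [TopologicalSpace X] [OpensMeasurableSpace X]
    (S : X → X) (n : ℕ) (x : X) (g : BoundedContinuousFunction X ℝ) :
    ∫ y, g y ∂(empiricalMeasure S n x) = birkhoffAverage ℝ S g (n + 1) x := by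
  rw [empiricalMeasure, integral_smul_measure,
    integral_finsetSum_measure fun k _ => g.integrable (Measure.dirac _)]
  simp only [birkhoffAverage, birkhoffSum]
  congr 1
  · rw [ENNReal.toReal_inv, ENNReal.toReal_natCast]
  · exact Finset.sum_congr rfl fun k _ =>
      integral_dirac' _ _ g.continuous.measurable.stronglyMeasurable

/-- If the integral of a continuous function is the same for all invariant probability measures,
then its Birkhoff averages converge uniformly to that value. -/
lemma tendstoUniformly_birkhoffAverage_of_integral_eq [MetricSpace X] [CompactSpace X]
    [BorelSpace X] {S : X → X} (hS : Continuous S) (f : BoundedContinuousFunction X ℝ) {a : ℝ}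
    (hf : ∀ μ : Measure X, IsProbabilityMeasure μ → MeasurePreserving S μ μ → ∫ x, f x ∂μ = a) :
    TendstoUniformly (fun n x => birkhoffAverage ℝ S f (n + 1) x) (fun _ => a) atTop := by
  rw [Metric.tendstoUniformly_iff]
  intro ε hε
  by_contra hbad
  simp only [not_eventually, not_forall, not_lt] at hbad
  obtain ⟨n₀, hn₀⟩ := hbad.exists
  have : Nonempty X := ⟨hn₀.choose⟩
  let B : Set ℕ := {n | ∃ x, ε ≤ dist a (birkhoffAverage ℝ S f (n + 1) x)}
  have : NeBot (atTop ⊓ 𝓟 B) := frequently_mem_iff_neBot.1 hbad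
  choose! x hx using fun n (hn : n ∈ B) => hn
  let F := Ultrafilter.of (atTop ⊓ 𝓟 B)
  have hF : (F : Filter ℕ) ≤ atTop ⊓ 𝓟 B := Ultrafilter.of_le _
  let ν : ℕ → ProbabilityMeasure X := fun n => ⟨empiricalMeasure S n (x n), inferInstance⟩
  obtain ⟨μ, -, hμ⟩ := isCompact_univ.ultrafilter_le_nhds (F.map ν) (by simp)
  have hlim : ∀ g : BoundedContinuousFunction X ℝ,
      Tendsto (fun n => birkhoffAverage ℝ S g (n + 1) (x n)) F
        (𝓝 (∫ y, g y ∂(μ : Measure X))) := by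
    intro g
    refine (ProbabilityMeasure.tendsto_iff_forall_integral_tendsto.1
      (show Tendsto ν F (𝓝 μ) from hμ) g).congr fun n => ?_
    exact integral_empiricalMeasure S n (x n) g
  have hinv : MeasurePreserving S (μ : Measure X) μ := by
    refine ⟨hS.measurable, ?_⟩
    have := Measure.isProbabilityMeasure_map (μ := (μ : Measure X)) hS.aemeasurable
    refine ext_of_forall_integral_eq_of_IsFiniteMeasure fun g => ?_
    rw [integral_map hS.aemeasurable g.continuous.aestronglyMeasurable]
    let gS : BoundedContinuousFunction X ℝ := g.compContinuous ⟨S, hS⟩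
    have hdiff : Tendsto (fun n => birkhoffAverage ℝ S gS (n + 1) (x n)
        - birkhoffAverage ℝ S g (n + 1) (x n)) F (𝓝 0) := by
      have h0 : Tendsto (fun n : ℕ => (2 * ‖g‖) * (1 / ((n : ℝ) + 1))) F (𝓝 0) := by
        simpa using (tendsto_one_div_add_atTop_nhds_zero_nat.mono_left
          (hF.trans inf_le_left)).const_mul (2 * ‖g‖)
      refine squeeze_zero_norm (fun n => ?_) h0
      have e : birkhoffAverage ℝ S gS (n + 1) (x n) =
          birkhoffAverage ℝ S g (n + 1) (S (x n)) := by
        simp only [birkhoffAverage, birkhoffSum, gS]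
        congr 1
        refine Finset.sum_congr rfl fun k _ => ?_
        simp [← Function.iterate_succ_apply, Function.iterate_succ_apply']
      rw [e, ← dist_eq_norm, dist_birkhoffAverage_apply_birkhoffAverage, mul_one_div]
      push_cast
      have := g.dist_le_two_norm (S^[n + 1] (x n)) (x n)
      have h1 : ‖(n : ℝ) + 1‖ = n + 1 := by rw [Real.norm_of_nonneg]; positivity
      gcongr
    have h2 := (hlim gS).sub (hlim g)
    have := tendsto_nhds_unique h2 hdiff
    simpa [gS, sub_eq_zero] using this
  have hfa := hf μ inferInstance hinv
  have hl := hlim f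
  rw [hfa] at hl
  have h1 : ∀ᶠ n in (F : Filter ℕ), dist (birkhoffAverage ℝ S f (n + 1) (x n)) a < ε :=
    hl.eventually (Metric.ball_mem_nhds a hε)
  have h2 : ∀ᶠ n in (F : Filter ℕ), n ∈ B := (hF.trans inf_le_right) (mem_principal_self B)
  obtain ⟨n, hn1, hn2⟩ := (h1.and h2).exists
  have := hx n hn2
  rw [dist_comm] at this
  linarith

end Birkhoff

/-! ### Aperiodicity of minimal systems -/

section Aperiodic

variable {X : Type*} [TopologicalSpace X] [T1Space X]

lemma infinite_of_perfectSpace [PerfectSpace X] [Nonempty X] : Infinite X := by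
  by_contra h
  rw [not_infinite_iff_finite] at h
  obtain ⟨x⟩ := ‹Nonempty X›
  obtain ⟨y, ⟨hy, -⟩, hyx⟩ := preperfect_iff_nhds.1 (PerfectSpace.univ_preperfect (α := X)) x
    (mem_univ x) {x} ((isOpen_discrete {x}).mem_nhds rfl)
  exact hyx hy

lemma IsMinimalHomeo.zpow_apply_injective [Infinite X] {T : Equiv.Perm X}
    (hT : IsMinimalHomeo T) (x : X) : Function.Injective fun n : ℤ => (T ^ n) x := by
  have key : ∀ n : ℤ, 0 < n → (T ^ n) x ≠ x := by
    intro n hn hx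
    have hfin : (range fun k : ℤ => (T ^ k) x).Finite := by
      refine ((finite_Ico (0 : ℤ) n).image fun k => (T ^ k) x).subset ?_
      rintro _ ⟨k, rfl⟩
      refine ⟨k % n, ⟨Int.emod_nonneg _ hn.ne', Int.emod_lt_of_pos _ hn⟩, ?_⟩
      conv_rhs => rw [← Int.emod_add_mul_ediv k n]
      simp only [zpow_add, zpow_mul, Equiv.Perm.mul_apply]
      rw [Equiv.Perm.zpow_apply_eq_self_of_apply_eq_self hx]
    have huniv := hfin.isClosed.closure_eq.symm.trans (hT x).closure_eq
    exact infinite_univ (huniv ▸ hfin)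
  have key' : ∀ a b : ℤ, a < b → (T ^ a) x ≠ (T ^ b) x := by
    intro a b hab h
    refine key (b - a) (by lia) ?_
    apply (T ^ a).injective
    rw [← Equiv.Perm.mul_apply, ← zpow_add, h]
    congr 2
    lia
  intro a b hab
  rcases lt_trichotomy a b with h | h | h
  · exact absurd hab (key' a b h)
  · exact h
  · exact absurd hab.symm (key' b a h)

end Aperiodic

/-! ### Counting the orbits of a speedup -/

section Count

variable {X : Type*} {T S : Equiv.Perm X} {p : X → ℕ}

lemma exists_speedup_cocycle (hT : ∀ x : X, Function.Injective fun n : ℤ => (T ^ n) x)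
    (hSp : ∀ x, S x = (T ^ p x) x) (y : X) :
    ∃ a : ℤ → ℤ, a 0 = 0 ∧ (∀ k, (S ^ k) y = (T ^ a k) y) ∧
      ∀ k, a (k + 1) = a k + p ((S ^ k) y) := by
  have hex : ∀ k : ℤ, ∃ m : ℤ, (S ^ k) y = (T ^ m) y := by
    intro k
    induction k using Int.induction_on with
    | zero => exact ⟨0, by simp⟩
    | succ k ih =>
      obtain ⟨m, hm⟩ := ih
      refine ⟨p ((S ^ (k : ℤ)) y) + m, ?_⟩
      rw [add_comm, zpow_add, Equiv.Perm.mul_apply, zpow_one, hSp, zpow_add,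
        Equiv.Perm.mul_apply, ← hm, zpow_natCast T]
    | pred k ih =>
      obtain ⟨m, hm⟩ := ih
      refine ⟨-p ((S ^ (-(k : ℤ) - 1)) y) + m, ?_⟩
      rw [zpow_add T, Equiv.Perm.mul_apply, ← hm, zpow_neg, Equiv.Perm.eq_inv_iff_eq,
        zpow_natCast T, ← hSp, ← Equiv.Perm.mul_apply, ← zpow_one_add]
      congr 2
      lia
  choose a ha using hex
  refine ⟨a, hT y ?_, ha, fun k => hT y ?_⟩
  · simpa using (ha 0).symm
  · simp only
    rw [← ha, add_comm k, add_comm (a k), zpow_add S, Equiv.Perm.mul_apply, zpow_one, hSp,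
      zpow_add T, Equiv.Perm.mul_apply, ← ha, zpow_natCast T]

lemma mem_zOrbit_self (T : Equiv.Perm X) (x : X) : x ∈ zOrbit T x := ⟨0, by simp⟩

lemma zOrbit_zpow_apply (T : Equiv.Perm X) (k : ℤ) (x : X) :
    zOrbit T ((T ^ k) x) = zOrbit T x := by
  ext z
  constructor
  · rintro ⟨n, rfl⟩
    exact ⟨n + k, by simp [zpow_add]⟩
  · rintro ⟨n, rfl⟩
    exact ⟨n - k, by simp [zpow_sub]⟩

/-- Exactly one point of each `S`-orbit in the `T`-orbit of `x` lies at or before `x` and is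
sent by `S` strictly after `x`, so these points are counted by the orbit number. -/
lemma card_filter_lt_jump (hT : ∀ x : X, Function.Injective fun n : ℤ => (T ^ n) x)
    (hp1 : ∀ x, 1 ≤ p x) {M : ℕ} (hM : ∀ x, p x ≤ M) (hSp : ∀ x, S x = (T ^ p x) x)
    {c : ℕ} (hc : IsOrbitNumber T S c) (x : X) :
    ((Finset.range M).filter fun j : ℕ => j < p ((T ^ (-(j : ℤ))) x)).card = c := by
  rw [← hc.2 x, ← Set.ncard_coe_finset]
  have hmono : ∀ a : ℤ → ℤ, ∀ y, (∀ k, a (k + 1) = a k + p ((S ^ k) y)) → StrictMono a := by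
    intro a y h
    refine strictMono_int_of_lt_succ fun k => ?_
    have := hp1 ((S ^ k) y)
    have := h k
    lia
  have hlt : ∀ i j : ℕ, i < j → j < p ((T ^ (-(j : ℤ))) x) →
      zOrbit S ((T ^ (-(i : ℤ))) x) ≠ zOrbit S ((T ^ (-(j : ℤ))) x) := by
    intro i j hij hj h
    obtain ⟨k, hk⟩ := h ▸ mem_zOrbit_self S ((T ^ (-(i : ℤ))) x)
    obtain ⟨a, ha0, ha, has⟩ := exists_speedup_cocycle hT hSp ((T ^ (-(j : ℤ))) x)
    have hm := hmono a _ has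
    simp only [ha, ← Equiv.Perm.mul_apply, ← zpow_add] at hk
    have hk' : a k + -(j : ℤ) = -i := hT x hk
    have hk0 : 0 < k := by
      rw [← hm.lt_iff_lt]
      lia
    have h1 : a 1 ≤ a k := hm.monotone hk0
    have h2 := has 0
    simp only [zero_add, zpow_zero, Equiv.Perm.one_apply, ha0] at h2
    lia
  refine Set.ncard_congr (fun j _ => zOrbit S ((T ^ (-(j : ℤ))) x)) ?_ ?_ ?_
  · intro j _
    refine ⟨⟨_, rfl⟩, ?_⟩
    rintro _ ⟨k, rfl⟩
    obtain ⟨a, -, ha, -⟩ := exists_speedup_cocycle hT hSp ((T ^ (-(j : ℤ))) x)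
    refine ⟨a k + -(j : ℤ), ?_⟩
    simp only [ha, zpow_add, Equiv.Perm.mul_apply]
  · intro i j hi hj h
    simp only [Finset.coe_filter, Finset.mem_range, mem_ofPred_eq] at hi hj
    rcases lt_trichotomy i j with hij | hij | hij
    · exact absurd h (hlt i j hij hj.2)
    · exact hij
    · exact absurd h.symm (hlt j i hij hi.2)
  · rintro _ ⟨⟨y, rfl⟩, hy⟩
    obtain ⟨m, rfl⟩ := hy (mem_zOrbit_self S y)
    obtain ⟨a, ha0, ha, has⟩ := exists_speedup_cocycle hT hSp ((T ^ m) x)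
    have hm := hmono a _ has
    have hge : ∀ k : ℕ, (k : ℤ) ≤ a k := by
      intro k
      induction k with
      | zero => simp [ha0]
      | succ k ih =>
        have := hm (show (k : ℤ) < (k + 1 : ℕ) by simp)
        push_cast at *
        lia
    have hle : ∀ k : ℕ, a (-(k : ℤ)) ≤ -k := by
      intro k
      induction k with
      | zero => simp [ha0]
      | succ k ih =>
        have := hm (show -((k + 1 : ℕ) : ℤ) < -(k : ℤ) by simp)
        push_cast at *
        lia
    obtain ⟨k, hk, hkmax⟩ := Int.exists_greatest_of_bdd (P := fun k => a k + m ≤ 0)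
      ⟨m.natAbs, fun z hz => by
        by_contra hlt
        have h1 := hge m.natAbs
        have h2 := hm (not_le.1 hlt)
        lia⟩
      ⟨-(m.natAbs : ℤ), by
        have := hle m.natAbs
        lia⟩
    have hk1 : 0 < a (k + 1) + m := by
      by_contra h
      have := hkmax (k + 1) (not_lt.1 h)
      lia
    have hpt : (T ^ (-((-(a k + m)).toNat : ℤ))) x = (S ^ k) ((T ^ m) x) := by
      rw [Int.toNat_of_nonneg (by lia), neg_neg, ha, zpow_add, Equiv.Perm.mul_apply]
    have hlt' : (-(a k + m)).toNat < p ((S ^ k) ((T ^ m) x)) := by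
      have := has k
      lia
    refine ⟨(-(a k + m)).toNat, ?_, ?_⟩
    · simp only [Finset.coe_filter, Finset.mem_range, mem_ofPred_eq]
      rw [hpt]
      exact ⟨hlt'.trans_le (hM _), hlt'⟩
    · rw [hpt, zOrbit_zpow_apply]

end Count

/-! ### The jump function -/

section Jump

variable {X : Type*} {T S : Equiv.Perm X} {p : X → ℕ}

lemma continuous_jump [TopologicalSpace X] [T2Space X] (hTc : Continuous T) (hSc : Continuous S)
    (hT : ∀ x : X, Function.Injective fun n : ℤ => (T ^ n) x)
    {M : ℕ} (hM : ∀ x, p x ≤ M) (hSp : ∀ x, S x = (T ^ p x) x) : Continuous p := by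
  have hcl : ∀ k : ℕ, IsClosed (p ⁻¹' {k}) := by
    intro k
    have hk : p ⁻¹' {k} = {x | S x = T^[k] x} := by
      ext x
      simp only [mem_preimage, mem_singleton_iff, mem_ofPred_eq, hSp,
        ← Equiv.Perm.coe_pow]
      refine ⟨fun h => by rw [h], fun h => ?_⟩
      have := @hT x (p x) k (by simpa using h)
      exact_mod_cast this
    rw [hk]
    exact isClosed_eq hSc (hTc.iterate k)
  rw [continuous_discrete_rng]
  intro k
  rw [← isClosed_compl_iff]
  have hk : (p ⁻¹' {k})ᶜ = ⋃ j ∈ {j ∈ Finset.range (M + 1) | j ≠ k}, p ⁻¹' {j} := by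
    ext x
    simpa [Nat.lt_succ_iff] using fun _ => hM x
  rw [hk]
  exact isClosed_biUnion_finset fun j _ => hcl j

/-- The mean jump of a speedup with respect to a `T`-invariant measure is the orbit number. -/
lemma integral_jump_eq [TopologicalSpace X] [T2Space X] [MeasurableSpace X] [BorelSpace X]
    (hTc : Continuous T) (hTc' : Continuous T.symm) (hp : Continuous p)
    (hT : ∀ x : X, Function.Injective fun n : ℤ => (T ^ n) x)
    (hp1 : ∀ x, 1 ≤ p x) {M : ℕ} (hM : ∀ x, p x ≤ M) (hSp : ∀ x, S x = (T ^ p x) x)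
    {c : ℕ} (hc : IsOrbitNumber T S c) {μ : Measure X} [IsProbabilityMeasure μ]
    (hμ : MeasurePreserving T μ μ) : ∫ x, (p x : ℝ) ∂μ = c := by
  let g : ℕ → X → ℝ := fun j x => if j < p x then 1 else 0
  have hgc : ∀ j, Continuous (g j) := fun j =>
    (continuous_of_discreteTopology (f := fun m : ℕ => if j < m then (1 : ℝ) else 0)).comp hp
  have hgb : ∀ j x, ‖g j x‖ ≤ 1 := by
    intro j x
    simp only [g]
    split_ifs <;> simp
  have hsymm : MeasurePreserving T.symm μ μ :=
    hμ.symm ⟨T, hTc.measurable, hTc'.measurable⟩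
  have hpow : ∀ j : ℕ, ((T ^ (-(j : ℤ)) : Equiv.Perm X) : X → X) = T.symm^[j] := by
    intro j
    rw [zpow_neg, zpow_natCast, ← inv_pow, Equiv.Perm.coe_pow]
    rfl
  have hgint : ∀ j (f : X → X), Continuous f → Integrable (fun x => g j (f x)) μ := fun j f hf =>
    .of_bound ((hgc j).comp hf).aestronglyMeasurable 1 (.of_forall fun x => hgb j (f x))
  have hinv : ∀ j, ∫ x, g j (T.symm^[j] x) ∂μ = ∫ x, g j x ∂μ := by
    intro j
    have hmp := hsymm.iterate j
    conv_rhs => rw [← hmp.map_eq]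
    rw [integral_map hmp.measurable.aemeasurable (hgc j).aestronglyMeasurable]
  calc ∫ x, (p x : ℝ) ∂μ = ∫ x, ∑ j ∈ Finset.range M, g j x ∂μ := by
        congr 1 with x
        have : {j ∈ Finset.range M | j < p x} = Finset.range (p x) := by
          ext j
          simpa using fun h => h.trans_le (hM x)
        simp [g, Finset.sum_boole, this]
    _ = ∑ j ∈ Finset.range M, ∫ x, g j x ∂μ :=
        integral_finsetSum _ fun j _ => hgint j id continuous_id
    _ = ∑ j ∈ Finset.range M, ∫ x, g j (T.symm^[j] x) ∂μ := by simp only [hinv]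
    _ = ∫ x, ∑ j ∈ Finset.range M, g j (T.symm^[j] x) ∂μ :=
        (integral_finsetSum _ fun j _ => hgint j _ (hTc'.iterate j)).symm
    _ = ∫ _, (c : ℝ) ∂μ := by
        congr 1 with x
        have := card_filter_lt_jump hT hp1 hM hSp hc x
        simp only [hpow] at this
        simp [g, Finset.sum_boole, this]
    _ = c := by simp

lemma speedup_iterate_apply (hSp : ∀ x, S x = (T ^ p x) x) (n : ℕ) (x : X) :
    S^[n] x = T^[birkhoffSum S p n x] x := by
  induction n with
  | zero => simp
  | succ n ih =>
    rw [Function.iterate_succ_apply', birkhoffSum_succ, add_comm (birkhoffSum _ _ _ _),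
      Function.iterate_add_apply, ← ih, hSp, Equiv.Perm.coe_pow]

lemma strictMono_birkhoffSum_jump (hp1 : ∀ x, 1 ≤ p x) (x : X) :
    StrictMono fun n => birkhoffSum S p n x :=
  strictMono_nat_of_lt_succ fun n => by
    rw [birkhoffSum_succ]
    exact Nat.lt_add_of_pos_right (hp1 _)

lemma birkhoffSum_eq_of_mem_dynEntourage {V : SetRel X X}
    (hV : ∀ a b, (a, b) ∈ V → p a = p b) {x y : X} {n : ℕ}
    (h : ∀ k < n, (S^[k] x, S^[k] y) ∈ V) : birkhoffSum S p n x = birkhoffSum S p n y :=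
  Finset.sum_congr rfl fun k hk => hV _ _ (h k (Finset.mem_range.1 hk))

lemma dynEntourage_subset_speedup (hp1 : ∀ x, 1 ≤ p x) (hSp : ∀ x, S x = (T ^ p x) x)
    {U V : SetRel X X} (hVU : V ⊆ U) (hV : ∀ a b, (a, b) ∈ V → p a = p b) {n m : ℕ}
    (hm : ∀ x, birkhoffSum S p n x ≤ m) : dynEntourage T V m ⊆ dynEntourage S U n := by
  rintro ⟨x, y⟩ hxy
  rw [mem_dynEntourage] at hxy ⊢
  have key : ∀ k < n, (S^[k] x, S^[k] y) ∈ V := by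
    intro k
    induction k using Nat.strong_induction_on with
    | _ k ih =>
      intro hk
      have he := birkhoffSum_eq_of_mem_dynEntourage hV fun i hi => ih i hi (hi.trans hk)
      rw [speedup_iterate_apply hSp, speedup_iterate_apply hSp, ← he]
      exact hxy _ ((strictMono_birkhoffSum_jump hp1 x hk).trans_le (hm x))
  exact fun k hk => hVU (key k hk)

lemma speedup_dynEntourage_subset {M : ℕ} (hM : ∀ x, p x ≤ M)
    (hSp : ∀ x, S x = (T ^ p x) x) {U V : SetRel X X} (hVU : V ⊆ dynEntourage T U M)
    (hV : ∀ a b, (a, b) ∈ V → p a = p b) {n m : ℕ}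
    (hm : ∀ x, m ≤ birkhoffSum S p n x) : dynEntourage S V n ⊆ dynEntourage T U m := by
  rintro ⟨x, y⟩ hxy
  rw [mem_dynEntourage] at hxy ⊢
  intro i hi
  obtain ⟨k, hk, hk1, hk2⟩ : ∃ k < n, birkhoffSum S p k x ≤ i ∧ i < birkhoffSum S p (k + 1) x := by
    have hex : ∃ k, i < birkhoffSum S p k x := ⟨n, hi.trans_le (hm x)⟩
    have h0 : Nat.find hex ≠ 0 := by
      intro h
      have := Nat.find_spec hex
      simp [h] at this
    obtain ⟨k, hk⟩ := Nat.exists_eq_succ_of_ne_zero h0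
    refine ⟨k, ?_, not_lt.1 (Nat.find_min hex (by lia)), ?_⟩
    · have := Nat.find_min' hex (hi.trans_le (hm x))
      lia
    · have := Nat.find_spec hex
      rwa [hk] at this
  have he := birkhoffSum_eq_of_mem_dynEntourage hV fun i hi => hxy i (hi.trans hk)
  have hj : i - birkhoffSum S p k x < M := by
    rw [birkhoffSum_succ] at hk2
    have := hM (S^[k] x)
    lia
  have hmem := mem_dynEntourage.1 (hVU (hxy k hk)) _ hj
  rw [speedup_iterate_apply hSp, speedup_iterate_apply hSp k y, ← he,
    ← Function.iterate_add_apply, ← Function.iterate_add_apply, Nat.sub_add_cancel hk1] at hmem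
  exact hmem

lemma exists_attained_birkhoffSum_bounds [Nonempty X] {M : ℕ} (hM : ∀ x, p x ≤ M) (n : ℕ) :
    (∃ x, ∀ y, birkhoffSum S p n x ≤ birkhoffSum S p n y) ∧
      ∃ x, ∀ y, birkhoffSum S p n y ≤ birkhoffSum S p n x := by
  have hne : (range (birkhoffSum S p n)).Nonempty := range_nonempty _
  have hbdd : BddAbove (range (birkhoffSum S p n)) := by
    refine ⟨n * M, ?_⟩
    rintro _ ⟨x, rfl⟩
    simpa [birkhoffSum] using Finset.sum_le_card_nsmul (Finset.range n) _ M fun k _ => hM (S^[k] x)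
  obtain ⟨x, hx⟩ := Nat.sInf_mem hne
  obtain ⟨z, hz⟩ := Nat.sSup_mem hne hbdd
  exact ⟨⟨x, fun y => hx ▸ Nat.sInf_le ⟨y, rfl⟩⟩, ⟨z, fun y => hz ▸ le_csSup hbdd ⟨y, rfl⟩⟩⟩

lemma tendsto_birkhoffSum_div {c : ℕ}
    (hu : TendstoUniformly (fun n x => birkhoffAverage ℝ S (fun y => (p y : ℝ)) (n + 1) x)
      (fun _ => (c : ℝ)) atTop) (x : ℕ → X) :
    Tendsto (fun n => ((birkhoffSum S p n (x n) : ℕ) : EReal) / n) atTop (𝓝 c) := by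
  have h : Tendsto (fun n : ℕ => ((birkhoffSum S p n (x n) : ℕ) : ℝ) / n) atTop (𝓝 c) := by
    rw [← tendsto_add_atTop_iff_nat 1, Metric.tendsto_nhds]
    intro ε hε
    filter_upwards [Metric.tendstoUniformly_iff.1 hu ε hε] with n hn
    have := hn (x (n + 1))
    rw [dist_comm] at this
    convert this using 2
    simp [birkhoffAverage, birkhoffSum, div_eq_inv_mul]
  have h' := (continuous_coe_real_ereal.tendsto (c : ℝ)).comp h
  simpa [Function.comp_def, EReal.coe_div] using h'

end Jump

end Auxiliary

/-- If `S` is a minimal bounded speedup of a minimal Cantor system `(X,T)`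
with orbit number `c`, and the `S`-invariant Borel probability measures coincide with the
`T`-invariant ones, then `h(S) = c · h(T)`. -/
theorem boundedSpeedup_entropy_eq_of_same_measures
    {X : Type*} [MetricSpace X] [CompactSpace X]
    [TotallyDisconnectedSpace X] [PerfectSpace X] [Nonempty X]
    [MeasurableSpace X] [BorelSpace X]
    (T : Equiv.Perm X) (hTc : Continuous T) (hTc' : Continuous T.symm)
    (hTmin : IsMinimalHomeo T)
    (p : X → ℕ) (hp1 : ∀ x, 1 ≤ p x) (hpbdd : ∃ M : ℕ, ∀ x, p x ≤ M)
    (S : Equiv.Perm X) (hSc : Continuous S) (hSc' : Continuous S.symm)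
    (hSp : ∀ x, S x = (T ^ p x) x) (hSmin : IsMinimalHomeo S)
    (c : ℕ) (hc : IsOrbitNumber T S c)
    (hMeas : ∀ μ : Measure X, IsProbabilityMeasure μ →
      ((∀ B : Set X, MeasurableSet B → μ (⇑S ⁻¹' B) = μ B) ↔
        (∀ B : Set X, MeasurableSet B → μ (⇑T ⁻¹' B) = μ B))) :
    Dynamics.coverEntropy (⇑S) Set.univ =
      (c : EReal) * Dynamics.coverEntropy (⇑T) Set.univ := by
  obtain ⟨M, hM⟩ := hpbdd
  have hinf : Infinite X := infinite_of_perfectSpace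
  have hT := hTmin.zpow_apply_injective
  have hpc : Continuous p := continuous_jump hTc hSc hT hM hSp
  have hu := tendstoUniformly_birkhoffAverage_of_integral_eq hSc
    (BoundedContinuousFunction.mkOfCompact
      ⟨fun x => (p x : ℝ), continuous_of_discreteTopology.comp hpc⟩) (a := c) fun μ hμ hSμ => by
    have hTμ := (hMeas μ hμ).1 fun B hB => hSμ.measure_preimage hB.nullMeasurableSet
    exact integral_jump_eq hTc hTc' hpc hT hp1 hM hSp hc
      ⟨hTc.measurable, Measure.ext fun B hB => by rw [Measure.map_apply hTc.measurable hB, hTμ B hB]⟩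
  have hbounds := exists_attained_birkhoffSum_bounds (S := S) hM
  choose x hx using fun n => (hbounds n).1
  choose z hz using fun n => (hbounds n).2
  have hc0 : c ≠ 0 := hc.1.ne'
  have hpV : {q : X × X | p q.1 = p q.2} ∈ uniformity X := by
    have := CompactSpace.uniformContinuous_of_continuous hpc
    exact this (DiscreteUniformity.relId_mem_uniformity ℕ)
  apply le_antisymm
  · refine iSup₂_le fun U hU => ?_
    have hV := Filter.inter_mem hU hpV
    refine (coverEntropyEntourage_le_natCast_mul
      (V := U ∩ {q : X × X | p q.1 = p q.2}) hc0 (tendsto_birkhoffSum_div hu z)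
      fun n => dynEntourage_subset_speedup hp1 hSp Set.inter_subset_left
        (fun _ _ h => h.2) (hz n)).trans ?_
    exact mul_le_mul_of_nonneg_left
      (Dynamics.coverEntropyEntourage_le_coverEntropy T Set.univ hV) (by simp)
  · have hcpos : (0 : EReal) < c := by exact_mod_cast hc.1
    rw [mul_comm, ← EReal.le_div_iff_mul_le hcpos (EReal.natCast_ne_top c)]
    refine iSup₂_le fun U hU => ?_
    rw [EReal.le_div_iff_mul_le hcpos (EReal.natCast_ne_top c), mul_comm]
    have hV := Filter.inter_mem (Dynamics.dynEntourage_mem_uniformity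
      (CompactSpace.uniformContinuous_of_continuous hTc) hU M) hpV
    exact (natCast_mul_le_coverEntropyEntourage hc0 (tendsto_birkhoffSum_div hu x)
      fun n => speedup_dynEntourage_subset hM hSp Set.inter_subset_left
        (fun _ _ h => h.2) (hx n)).trans
      (Dynamics.coverEntropyEntourage_le_coverEntropy S Set.univ hV)
end
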